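/- arXiv:1912.01994 — 2 statements merged into one kernel-verified Lean document; each statement's English description precedes it below -/
import Mathlib

section
/- Let p be a prime number. For any X ∈ 𝒳_p there exist n ∈ ℕ and a cyclic subgroup H of the multiplicative group (ℤ/p^nℤ)ˣ such that X = ℕ ∩ π_n^{-1}(H). -/
/-!
A number prime to `p` lies in the closure of `a^ℕ` if and only if it is congruent to a power of `a`
modulo every `p ^ m`. Some power of `a` has the form `1 + p ^ n * c` with `p ∤ c` and `n ≥ 2`, since
`a > 1`. Modulo `p ^ (m + n)` such an element has order `p ^ m`, which is the order of the kernel of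
the reduction `(ℤ/p^(m+n)ℤ)ˣ → (ℤ/p^nℤ)ˣ`, so the class of `a` generates a subgroup containing this
kernel. Being congruent to a power of `a` modulo `p ^ n` therefore implies the same modulo every
higher power of `p`, and the subgroup generated by `a` in `(ℤ/p^nℤ)ˣ` has the required property.
-/

open TopologicalSpace

/-- The arithmetic progression `a + bℕ₀ = {a + b*n : n ≥ 0}` inside the positive integers. -/
def golombBasic (a b : ℕ) : Set ℕ+ := {x : ℕ+ | ∃ n : ℕ, (x : ℕ) = a + b * n}

/-- The Golomb topology on the positive integers, generated by the arithmetic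
progressions `a + bℕ₀` with coprime `a, b ∈ ℕ`. -/
instance golombTopology : TopologicalSpace ℕ+ :=
  generateFrom {S : Set ℕ+ | ∃ a b : ℕ, 0 < a ∧ 0 < b ∧ Nat.Coprime a b ∧ S = golombBasic a b}

/-- The positive integers not divisible by `p` (the set `ℕ \ pℕ`). -/
abbrev Np (p : ℕ) : Type := {x : ℕ+ // ¬ p ∣ (x : ℕ)}

/-- The `p`-adic topology on `ℕ \ pℕ`, generated by the traces of the sets
`x + p^nℕ₀`, `x, n ∈ ℕ`. -/
def padicTop (p : ℕ) : TopologicalSpace (Np p) :=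
  generateFrom {S : Set (Np p) | ∃ x n : ℕ, 0 < x ∧ 0 < n ∧
    S = {y : Np p | ∃ k : ℕ, ((y : ℕ+) : ℕ) = x + p ^ n * k}}

/-- Closure of a set of positive integers in the `p`-adic topology on `ℕ \ pℕ`,
viewed again as a set of positive integers. -/
def padicClosure (p : ℕ) (A : Set ℕ+) : Set ℕ+ :=
  Subtype.val '' (@closure (Np p) (padicTop p) (Subtype.val ⁻¹' A))

/-- `a^ℕ = {a^k : k ∈ ℕ}`, the set of positive powers of `a`. -/
def powSet (a : ℕ) : Set ℕ+ := {y : ℕ+ | ∃ k : ℕ, 0 < k ∧ (y : ℕ) = a ^ k}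

/-- The closure of `a^ℕ` in the `p`-adic topology on `ℕ \ pℕ`. -/
def clPow (p a : ℕ) : Set ℕ+ := padicClosure p (powSet a)

/-- The family `𝒳_p` of closures of the sets `a^ℕ` for `a ∈ ℕ \ pℕ`, `a ≠ 1`. -/
def XX (p : ℕ) : Set (Set ℕ+) := {X | ∃ a : ℕ, 0 < a ∧ a ≠ 1 ∧ ¬ p ∣ a ∧ X = clPow p a}

/-- The projection `π_n(X)` of a set of positive integers to `ℤ/p^nℤ`. -/
def pin (p n : ℕ) (X : Set ℕ+) : Set (ZMod (p ^ n)) :=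
  (fun y : ℕ+ => ((y : ℕ) : ZMod (p ^ n))) '' X

/-- `n(X)`: the least `n ∈ ℕ` with `X = ℕ ∩ π_n⁻¹(π_n(X))` and `|π_n(X)| ≥ max(p,3)`. -/
noncomputable def nX (p : ℕ) (X : Set ℕ+) : ℕ :=
  sInf {n : ℕ | 0 < n ∧ X = {y : ℕ+ | ((y : ℕ) : ZMod (p ^ n)) ∈ pin p n X} ∧
    max p 3 ≤ (pin p n X).ncard}

/-- `i(X)`: the index of the subgroup `π_{n(X)}(X)` in the group of units of `ℤ/p^{n(X)}ℤ`. -/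
noncomputable def iX (p : ℕ) (X : Set ℕ+) : ℕ :=
  Nat.card ((ZMod (p ^ nX p X))ˣ) / (pin p (nX p X) X).ncard

theorem isTopologicalBasis_padicTop (p : ℕ) :
    @IsTopologicalBasis (Np p) (padicTop p) {S | ∃ x n : ℕ, 0 < x ∧ 0 < n ∧
      S = {y : Np p | ∃ k : ℕ, ((y : ℕ+) : ℕ) = x + p ^ n * k}} := by
  refine @IsTopologicalBasis.mk _ (padicTop p) _ ?_ ?_ rfl
  · rintro _ ⟨x₁, n₁, -, hn₁, rfl⟩ _ ⟨x₂, n₂, -, -, rfl⟩ y ⟨⟨k₁, hk₁⟩, ⟨k₂, hk₂⟩⟩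
    refine ⟨_, ⟨y.1, n₁ + n₂, y.1.pos, Nat.add_pos_left hn₁ n₂, rfl⟩, ⟨0, rfl⟩, ?_⟩
    rintro z ⟨k, hk⟩
    exact ⟨⟨k₁ + p ^ n₂ * k, by rw [hk, hk₁]; ring⟩, ⟨k₂ + p ^ n₁ * k, by rw [hk, hk₂]; ring⟩⟩
  · exact Set.eq_univ_of_forall fun y ↦
      Set.mem_sUnion.mpr ⟨_, ⟨y.1, 1, y.1.pos, one_pos, rfl⟩, ⟨0, rfl⟩⟩

theorem mem_padicClosure_iff {p : ℕ} {A : Set ℕ+} {y : ℕ+} :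
    y ∈ padicClosure p A ↔
      ¬ p ∣ y ∧ ∀ n, 0 < n → ∃ z ∈ A, ∃ k : ℕ, (z : ℕ) = y + p ^ n * k := by
  simp only [padicClosure, Set.mem_image, Subtype.exists, exists_and_right, exists_eq_right,
    @IsTopologicalBasis.mem_closure_iff _ (padicTop p) _ (isTopologicalBasis_padicTop p)]
  constructor
  · rintro ⟨hy, h⟩
    refine ⟨hy, fun n hn ↦ ?_⟩
    obtain ⟨z, hz, hzA⟩ := h _ ⟨y, n, y.pos, hn, rfl⟩ ⟨0, rfl⟩
    exact ⟨z, hzA, hz⟩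
  · rintro ⟨hy, h⟩
    refine ⟨hy, ?_⟩
    rintro _ ⟨x, n, -, hn, rfl⟩ ⟨j, hj : (y : ℕ) = x + p ^ n * j⟩
    obtain ⟨z, hzA, k, hk⟩ := h n hn
    have hz : ¬ p ∣ z := by
      rwa [hk, Nat.dvd_add_left (Dvd.dvd.mul_right (dvd_pow_self p hn.ne') k)]
    exact ⟨⟨z, hz⟩, ⟨j + k, by rw [hk, hj]; ring⟩, hzA⟩

theorem exists_ge_pow_modEq_pow {a N : ℕ} (ha : 1 < a) (hN : 0 < N) (h : a.Coprime N)
    (k b : ℕ) : ∃ l, 0 < l ∧ b ≤ a ^ l ∧ a ^ l ≡ a ^ k [MOD N] := by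
  have hφ : 0 < N.totient := Nat.totient_pos.mpr hN
  refine ⟨k + N.totient * (b + 1), by positivity, ?_, ?_⟩
  · calc b ≤ N.totient * (b + 1) := b.le_succ.trans (Nat.le_mul_of_pos_left _ hφ)
      _ ≤ k + N.totient * (b + 1) := Nat.le_add_left _ _
      _ ≤ a ^ (k + N.totient * (b + 1)) := (Nat.lt_pow_self ha).le
  · simpa only [pow_add, pow_mul, one_pow, mul_one] using
      ((Nat.ModEq.pow_totient h).pow (b + 1)).mul_left (a ^ k)

theorem mem_clPow_iff {p a : ℕ} (hp : 1 < p) (ha : 1 < a) (hpa : a.Coprime p) {y : ℕ+} :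
    y ∈ clPow p a ↔ ∀ n, ∃ k, a ^ k ≡ y [MOD p ^ n] := by
  rw [clPow, mem_padicClosure_iff]
  constructor
  · rintro ⟨-, h⟩ n
    obtain ⟨z, ⟨k, -, hz⟩, j, hj⟩ := h (n + 1) n.succ_pos
    refine ⟨k, Nat.ModEq.of_dvd (pow_dvd_pow p n.le_succ) ?_⟩
    rw [← hz, hj]
    exact Nat.add_modulus_mul_modEq_iff.mpr rfl
  · intro h
    constructor
    · obtain ⟨k, hk⟩ := h 1
      have hy : Nat.Coprime p y := by
        rw [pow_one] at hk
        exact Nat.Coprime.symm (hk.gcd_eq.symm.trans (hpa.pow_left k))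
      exact fun hd ↦ hp.ne' (hy.eq_one_of_dvd hd)
    · intro n _
      obtain ⟨k, hk⟩ := h n
      -- The basic neighbourhood `y + p ^ n * ℕ₀` is one-sided, so the power must be at least `y`.
      obtain ⟨l, hl, hyl, hlk⟩ :=
        exists_ge_pow_modEq_pow ha (pow_pos (zero_lt_one.trans hp) n) (hpa.pow_right n) k y
      obtain ⟨j, hj⟩ := (Nat.modEq_iff_dvd' hyl).mp (hlk.trans hk).symm
      exact ⟨⟨a ^ l, by positivity⟩, ⟨l, hl, rfl⟩, j, (Nat.sub_eq_iff_eq_add' hyl).mp hj⟩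

theorem card_ker_unitsMap_mul_totient {M N : ℕ} [NeZero N] (hMN : M ∣ N) :
    Nat.card (ZMod.unitsMap hMN).ker * M.totient = N.totient := by
  have : NeZero M := ⟨ne_zero_of_dvd_ne_zero (NeZero.ne N) hMN⟩
  have hindex : (ZMod.unitsMap hMN).ker.index = M.totient := by
    rw [Subgroup.index_ker, MonoidHom.range_eq_top.mpr (ZMod.unitsMap_surjective hMN),
      Subgroup.card_top, Nat.card_eq_fintype_card, ZMod.card_units_eq_totient]
  rw [← hindex, Subgroup.card_mul_index, Nat.card_eq_fintype_card, ZMod.card_units_eq_totient]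

theorem card_ker_unitsMap_prime_pow {p n : ℕ} (hp : p.Prime) (hn : 0 < n) (m : ℕ) :
    Nat.card (ZMod.unitsMap (pow_dvd_pow p (Nat.le_add_left n m))).ker = p ^ m := by
  have : NeZero p := ⟨hp.ne_zero⟩
  refine Nat.eq_of_mul_eq_mul_right (Nat.totient_pos.mpr (pow_pos hp.pos n)) ?_
  rw [card_ker_unitsMap_mul_totient, Nat.totient_prime_pow hp hn,
    Nat.totient_prime_pow hp (Nat.add_pos_right m hn), Nat.add_sub_assoc hn, pow_add, mul_assoc]

theorem zpowers_eq_ker_unitsMap {p n m : ℕ} (hp : p.Prime) (hpn : n + 2 ≤ p * n)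
    {c : ℤ} (hc : ¬ (p : ℤ) ∣ c) {u : (ZMod (p ^ (m + n)))ˣ}
    (hu : (u : ZMod (p ^ (m + n))) = 1 + p ^ n * c) :
    Subgroup.zpowers u = (ZMod.unitsMap (pow_dvd_pow p (Nat.le_add_left n m))).ker := by
  have : NeZero p := ⟨hp.ne_zero⟩
  have hn : n ≠ 0 := by rintro rfl; omega
  have horder : orderOf u = p ^ m := by
    rw [← orderOf_units, hu, ZMod.orderOf_one_add_mul_prime_pow hp n hn hpn c hc]
  have hmem : u ∈ (ZMod.unitsMap (pow_dvd_pow p (Nat.le_add_left n m))).ker := by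
    rw [MonoidHom.mem_ker, Units.ext_iff, ZMod.unitsMap_def, Units.coe_map, MonoidHom.coe_coe, hu]
    simp only [map_add, map_one, map_mul, map_pow, map_natCast, map_intCast]
    rw [← Nat.cast_pow, ZMod.natCast_self, zero_mul, add_zero, Units.val_one]
  refine Subgroup.eq_of_le_of_card_ge (Subgroup.zpowers_le.mpr hmem) ?_
  rw [card_ker_unitsMap_prime_pow hp (Nat.pos_of_ne_zero hn), Nat.card_zpowers, horder]

theorem exists_pow_eq_one_add_pow_mul {p a : ℕ} (hp : 1 < p) (ha : 1 < a) (hpa : a.Coprime p)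
    (r : ℕ) : ∃ s n c, r ≤ n ∧ ¬ p ∣ c ∧ a ^ s = 1 + p ^ n * c := by
  have hpr : 0 < p ^ r := pow_pos (zero_lt_one.trans hp) r
  set s := Nat.totient (p ^ r)
  have hs : 1 < a ^ s := Nat.one_lt_pow (Nat.totient_pos.mpr hpr).ne' ha
  obtain ⟨d, hd⟩ : p ^ r ∣ a ^ s - 1 :=
    (Nat.modEq_iff_dvd' hs.le).mp (Nat.ModEq.pow_totient (hpa.pow_right r)).symm
  have hd₀ : d ≠ 0 := by
    rintro rfl
    exact (Nat.sub_pos_of_lt hs).ne' hd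
  obtain ⟨t, c, hc, rfl⟩ := Nat.exists_eq_pow_mul_and_not_dvd hd₀ p hp.ne'
  refine ⟨s, r + t, c, Nat.le_add_right r t, hc, ?_⟩
  rw [pow_add, mul_assoc]
  exact (Nat.sub_eq_iff_eq_add' hs.le).mp hd

theorem exists_ker_unitsMap_le_zpowers {p a : ℕ} (hp : p.Prime) (ha : 1 < a)
    (hpa : a.Coprime p) :
    ∃ n, 0 < n ∧ ∀ m, (ZMod.unitsMap (pow_dvd_pow p (Nat.le_add_left n m))).ker ≤
      Subgroup.zpowers (ZMod.unitOfCoprime a (hpa.pow_right (m + n))) := by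
  obtain ⟨s, n, c, hn, hc, hs⟩ := exists_pow_eq_one_add_pow_mul hp.one_lt ha hpa 2
  refine ⟨n, by omega, fun m ↦ ?_⟩
  set u := ZMod.unitOfCoprime a (hpa.pow_right (m + n))
  have hu : ((u ^ s : (ZMod (p ^ (m + n)))ˣ) : ZMod (p ^ (m + n))) = 1 + p ^ n * (c : ℤ) := by
    rw [Units.val_pow_eq_pow_val, ZMod.coe_unitOfCoprime]
    exact_mod_cast congrArg (Nat.cast : ℕ → ZMod (p ^ (m + n))) hs
  have hpn : n + 2 ≤ p * n := by nlinarith [hp.two_le]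
  rw [← zpowers_eq_ker_unitsMap hp hpn (Int.natCast_dvd_natCast.not.mpr hc) hu]
  exact Subgroup.zpowers_le.mpr (Subgroup.npow_mem_zpowers u s)

theorem exists_mem_zpowers_unitOfCoprime_iff {a N : ℕ} [NeZero N] (h : a.Coprime N) {y : ℕ} :
    (∃ u ∈ Subgroup.zpowers (ZMod.unitOfCoprime a h), (y : ZMod N) = u) ↔
      ∃ k, a ^ k ≡ y [MOD N] := by
  simp only [← mem_powers_iff_mem_zpowers, Submonoid.mem_powers_iff, exists_exists_eq_and,
    Units.val_pow_eq_pow_val, ZMod.coe_unitOfCoprime, ← Nat.cast_pow, ZMod.natCast_eq_natCast_iff,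
    Nat.ModEq.comm]

theorem exists_pow_modEq_of_ker_unitsMap_le {a y M N : ℕ} [NeZero N] (hMN : M ∣ N)
    (ha : a.Coprime N) (hy : y.Coprime N)
    (hker : (ZMod.unitsMap hMN).ker ≤ Subgroup.zpowers (ZMod.unitOfCoprime a ha))
    (h : ∃ k, a ^ k ≡ y [MOD M]) : ∃ k, a ^ k ≡ y [MOD N] := by
  obtain ⟨k, hk⟩ := h
  set f := ZMod.unitsMap hMN
  set u := ZMod.unitOfCoprime a ha
  set v := ZMod.unitOfCoprime y hy with hv
  have hf : f v = f u ^ k := by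
    ext
    simpa [f, u, v, ZMod.unitsMap_def] using ((ZMod.natCast_eq_natCast_iff _ _ M).mpr hk).symm
  have hvu : v ∈ Subgroup.zpowers u := by
    rw [← Subgroup.comap_map_eq_self hker, Subgroup.mem_comap, MonoidHom.map_zpowers, hf]
    exact Subgroup.npow_mem_zpowers _ k
  exact (exists_mem_zpowers_unitOfCoprime_iff ha).mp ⟨v, hvu, by rw [hv, ZMod.coe_unitOfCoprime]⟩

/-- For any `X ∈ 𝒳_p` there exist `n ∈ ℕ` and a cyclic subgroup `H` of `(ℤ/p^nℤ)ˣ`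
such that `X = ℕ ∩ π_n⁻¹(H)`. -/
theorem XX_eq_preimage_cyclic (p : ℕ) (hp : p.Prime) (X : Set ℕ+) (hX : X ∈ XX p) :
    ∃ (n : ℕ) (H : Subgroup ((ZMod (p ^ n))ˣ)), 0 < n ∧ IsCyclic H ∧
      X = {y : ℕ+ | ∃ u : (ZMod (p ^ n))ˣ, u ∈ H ∧ ((y : ℕ) : ZMod (p ^ n)) = (u : ZMod (p ^ n))} := by
  obtain ⟨a, ha₀, ha₁, hdvd, rfl⟩ := hX
  have : NeZero p := ⟨hp.ne_zero⟩
  have ha : 1 < a := by omega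
  have hpa : a.Coprime p := (hp.coprime_iff_not_dvd.mpr hdvd).symm
  obtain ⟨n, hn, hker⟩ := exists_ker_unitsMap_le_zpowers hp ha hpa
  refine ⟨n, Subgroup.zpowers (ZMod.unitOfCoprime a (hpa.pow_right n)), hn, inferInstance, ?_⟩
  ext y
  rw [mem_clPow_iff hp.one_lt ha hpa, Set.mem_ofPred_eq, exists_mem_zpowers_unitOfCoprime_iff]
  refine ⟨fun h ↦ h n, fun h m ↦ ?_⟩
  have hy : Nat.Coprime y (p ^ (m + n)) := by
    obtain ⟨k, hk⟩ := h
    have hyn : Nat.Coprime y (p ^ n) := hk.gcd_eq.symm.trans ((hpa.pow_right n).pow_left k)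
    exact (hyn.coprime_dvd_right (dvd_pow_self p hn.ne')).pow_right _
  obtain ⟨k, hk⟩ := exists_pow_modEq_of_ker_unitsMap_le _ _ hy (hker m) h
  exact ⟨k, hk.of_dvd (pow_dvd_pow p (Nat.le_add_right m n))⟩
end

section
/- Let p be an odd prime number. The family {1+p^nℕ₀ : n ∈ ℕ} coincides with the set of ↑-chain elements of the poset 𝒳_p, i.e., an element t ∈ 𝒳_p satisfies that {X ∈ 𝒳_p : X ⊆ t} is linearly ordered by inclusion if and only if t = 1+p^nℕ₀ for some n ∈ ℕ. Moreover the set of ↑-chain elements is linearly ordered by inclusion. -/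
/-!
For integers `a, b > 1` prime to `p`, the inclusion `clPow p b ⊆ clPow p a` says that `b` is a power
of `a` modulo every `p ^ n`.

If `a = 1 + p ^ n * u` with `n ≠ 0` and `p ∤ u`, then `a` has order `p ^ i` modulo `p ^ (n + i)`,
while every `y ≡ 1` modulo `p ^ n` has order dividing `p ^ i`. As the unit group modulo
`p ^ (n + i)` is cyclic for odd `p`, such a `y` is a power of `a`, so `clPow p a = 1 + p ^ n ℕ₀`.
Hence the members of `𝒳_p` contained in `1 + p ℕ₀` form a chain.

If `a ≢ 1` modulo `p`, then `clPow p (a ^ p)` and `clPow p (a ^ (p - 1))` are incomparable subsets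
of `clPow p a`. Modulo `p`, the powers of `a ^ (p - 1)` are all `1`, whereas `a ^ p ≡ a`. Modulo a
large power of `p`, the order of `a` is divisible by `p`, so `a ^ (p - 1)`, whose exponent is prime
to `p`, is not a power of `a ^ p`.
-/

open TopologicalSpace

/-- `t ∈ 𝒳_p` is an `↑`-chain element of the poset `𝒳_p` (ordered by reverse inclusion),
i.e. its upper set `{X ∈ 𝒳_p : X ⊆ t}` is a chain. -/
def upChain (p : ℕ) (t : Set ℕ+) : Prop :=
  ∀ X ∈ XX p, ∀ Y ∈ XX p, X ⊆ t → Y ⊆ t → X ⊆ Y ∨ Y ⊆ X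

section Topology

variable {p : ℕ}

lemma mem_golombBasic {a b : ℕ} {x : ℕ+} :
    x ∈ golombBasic a b ↔ a ≤ x ∧ ((x : ℕ) : ZMod b) = a := by
  constructor
  · rintro ⟨n, hn⟩
    exact ⟨by omega, by simp [hn]⟩
  · rintro ⟨hle, h⟩
    obtain ⟨n, hn⟩ := (Nat.modEq_iff_dvd' hle).1 ((ZMod.natCast_eq_natCast_iff _ _ _).1 h.symm)
    exact ⟨n, by omega⟩

lemma mem_golombBasic_one {b : ℕ} {x : ℕ+} : x ∈ golombBasic 1 b ↔ ((x : ℕ) : ZMod b) = 1 := by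
  rw [mem_golombBasic, Nat.cast_one]
  exact and_iff_right x.pos

lemma golombBasic_subset_of_dvd (a : ℕ) {b c : ℕ} (h : b ∣ c) :
    golombBasic a c ⊆ golombBasic a b := by
  rintro x ⟨n, hn⟩
  obtain ⟨d, rfl⟩ := h
  exact ⟨d * n, by rw [hn, mul_assoc]⟩

lemma golombBasic_subset_of_mem {a b : ℕ} {x : ℕ+} (hx : x ∈ golombBasic a b) :
    golombBasic x b ⊆ golombBasic a b := by
  rintro y ⟨n, hn⟩
  obtain ⟨m, hm⟩ := hx
  exact ⟨m + n, by rw [hn, hm, mul_add, add_assoc]⟩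

lemma padicTop_nhds_hasBasis (y : Np p) :
    (@nhds _ (padicTop p) y).HasBasis (fun _ : ℕ => True)
      fun n => Subtype.val ⁻¹' golombBasic (y : ℕ+) (p ^ n) := by
  have hanti : Antitone fun n => (Subtype.val ⁻¹' golombBasic (y : ℕ+) (p ^ n) : Set (Np p)) :=
    fun m n hmn => Set.preimage_mono (golombBasic_subset_of_dvd _ (pow_dvd_pow p hmn))
  have hnhds : @nhds _ (padicTop p) y =
      ⨅ n : ℕ, Filter.principal (Subtype.val ⁻¹' golombBasic (y : ℕ+) (p ^ n)) := by
    rw [padicTop, nhds_generateFrom]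
    refine le_antisymm (le_iInf fun n => ?_) (le_iInf₂ ?_)
    · refine le_trans ?_ (Filter.principal_mono.2 (hanti n.le_succ))
      exact iInf₂_le _ ⟨⟨0, rfl⟩, y, n + 1, y.1.pos, n.succ_pos, rfl⟩
    · rintro _ ⟨hy, x, n, -, -, rfl⟩
      exact iInf_le_of_le n (Filter.principal_mono.2
        (Set.preimage_mono (golombBasic_subset_of_mem hy)))
  rw [hnhds]
  exact Filter.hasBasis_iInf_principal hanti.directed_ge

lemma mem_padicClosure {A : Set ℕ+} {y : ℕ+} :
    y ∈ padicClosure p A ↔ ¬ p ∣ (y : ℕ) ∧ ∀ n, (A ∩ golombBasic y (p ^ n)).Nonempty := by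
  let _ := padicTop p
  have hclosure (z : Np p) : z ∈ closure (Subtype.val ⁻¹' A) ↔
      ∀ n, ∃ x : Np p, x.1 ∈ A ∧ x.1 ∈ golombBasic z.1 (p ^ n) := by
    simp [mem_closure_iff_nhds_basis (padicTop_nhds_hasBasis z)]
  constructor
  · rintro ⟨z, hz, rfl⟩
    refine ⟨z.2, fun n => ?_⟩
    obtain ⟨x, hx⟩ := (hclosure z).1 hz n
    exact ⟨x, hx⟩
  · rintro ⟨hy, h⟩
    refine ⟨⟨y, hy⟩, (hclosure _).2 fun n => ?_, rfl⟩
    -- Points of `y + p ^ (n + 1) ℕ₀` are prime to `p`, which fails for `y + p ^ 0 ℕ₀`.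
    obtain ⟨x, hxA, k, hk⟩ := h (n + 1)
    have hx : ¬ p ∣ (x : ℕ) := by
      rwa [hk, pow_succ', mul_assoc, Nat.dvd_add_left (dvd_mul_right _ _)]
    exact ⟨⟨x, hx⟩, hxA, golombBasic_subset_of_dvd _ (pow_dvd_pow p n.le_succ) ⟨k, hk⟩⟩

end Topology

section ClosureOfPowers

variable {p a b : ℕ}

lemma exists_pow_ge_of_coprime {m : ℕ} (hm : 0 < m) (ha : 1 < a) (ham : a.Coprime m) (k N : ℕ) :
    ∃ K, N ≤ a ^ K ∧ (a : ZMod m) ^ K = (a : ZMod m) ^ k := by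
  have hN : N ≤ m.totient * N := Nat.le_mul_of_pos_left N (Nat.totient_pos.2 hm)
  refine ⟨k + m.totient * N, ?_, ?_⟩
  · have := Nat.lt_pow_self ha (n := k + m.totient * N)
    omega
  · have hone : (a : ZMod m) ^ m.totient = 1 := by
      exact_mod_cast (ZMod.natCast_eq_natCast_iff _ _ _).2 (Nat.ModEq.pow_totient ham)
    rw [pow_add, pow_mul, hone, one_pow, mul_one]

lemma mem_clPow (hp : 1 < p) (ha : 1 < a) (hap : a.Coprime p) {y : ℕ+} :
    y ∈ clPow p a ↔ ∀ n, ((y : ℕ) : ZMod (p ^ n)) ∈ Submonoid.powers (a : ZMod (p ^ n)) := by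
  rw [clPow, mem_padicClosure]
  constructor
  · rintro ⟨-, h⟩ n
    obtain ⟨x, ⟨k, -, hk⟩, hx⟩ := h n
    exact ⟨k, by simp [← (mem_golombBasic.1 hx).2, hk]⟩
  · refine fun h => ⟨fun hpy => ?_, fun n => ?_⟩
    · obtain ⟨k, hk⟩ := h 1
      have hdvd : p ∣ a ^ k := by
        rw [pow_one] at hk
        rw [← ZMod.natCast_eq_zero_iff, Nat.cast_pow]
        exact hk.trans ((ZMod.natCast_eq_zero_iff _ _).2 hpy)
      exact hp.ne' (Nat.eq_one_of_dvd_coprimes (hap.pow_left k) hdvd dvd_rfl)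
    · obtain ⟨k, hk⟩ := h n
      -- The exponent `0` is not allowed in `powSet a`, hence the bound `y + 1`.
      obtain ⟨K, hle, hK⟩ := exists_pow_ge_of_coprime (pow_pos (zero_lt_one.trans hp) n) ha
        (hap.pow_right n) k (y + 1)
      have hK0 : 0 < K := Nat.pos_of_ne_zero fun h0 => by simp [h0] at hle
      refine ⟨⟨a ^ K, by positivity⟩, ⟨K, hK0, rfl⟩, mem_golombBasic.2 ⟨?_, ?_⟩⟩
      · exact (Nat.le_succ _).trans hle
      · simpa using hK.trans hk

lemma self_mem_clPow (hp : 1 < p) (ha : 1 < a) (hap : a.Coprime p) :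
    (⟨a, zero_lt_one.trans ha⟩ : ℕ+) ∈ clPow p a :=
  (mem_clPow hp ha hap).2 fun _ => Submonoid.mem_powers _

lemma clPow_subset_clPow_iff (hp : 1 < p) (ha : 1 < a) (hap : a.Coprime p) (hb : 1 < b)
    (hbp : b.Coprime p) :
    clPow p b ⊆ clPow p a ↔
      ∀ n, (b : ZMod (p ^ n)) ∈ Submonoid.powers (a : ZMod (p ^ n)) := by
  refine ⟨fun h => (mem_clPow hp ha hap).1 (h (self_mem_clPow hp hb hbp)), fun h y hy => ?_⟩
  rw [mem_clPow hp ha hap]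
  exact fun n => Submonoid.powers_le.2 (h n) ((mem_clPow hp hb hbp).1 hy n)

lemma clPow_pow_subset (hp : 1 < p) (ha : 1 < a) (hap : a.Coprime p) {k : ℕ} (hk : k ≠ 0) :
    clPow p (a ^ k) ⊆ clPow p a :=
  (clPow_subset_clPow_iff hp ha hap (Nat.one_lt_pow hk ha) (hap.pow_left k)).2
    fun _ => ⟨k, by simp⟩

lemma clPow_subset_golombBasic_one_iff (hp : 1 < p) (ha : 1 < a) (hap : a.Coprime p) {n : ℕ} :
    clPow p a ⊆ golombBasic 1 (p ^ n) ↔ (a : ZMod (p ^ n)) = 1 := by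
  refine ⟨fun h => mem_golombBasic_one.1 (h (self_mem_clPow hp ha hap)), fun hone y hy => ?_⟩
  obtain ⟨k, hk⟩ := (mem_clPow hp ha hap).1 hy n
  rw [mem_golombBasic_one, ← hk]
  simp only [hone, one_pow]

lemma mem_XX_iff (hp : p.Prime) {X : Set ℕ+} :
    X ∈ XX p ↔ ∃ a, 1 < a ∧ a.Coprime p ∧ X = clPow p a := by
  refine exists_congr fun a => ?_
  rw [Nat.coprime_comm, hp.coprime_iff_not_dvd, ← and_assoc]
  exact and_congr_left' (by omega)

end ClosureOfPowers

section OneModP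

variable {p n : ℕ}

lemma zpowers_eq_ker_powMonoidHom_orderOf {G : Type*} [CommGroup G] [Finite G] [IsCyclic G]
    (x : G) : Subgroup.zpowers x = (powMonoidHom (orderOf x) : G →* G).ker := by
  refine Subgroup.eq_of_le_of_card_ge ?_ ?_
  · simp [Subgroup.zpowers_le, MonoidHom.mem_ker, pow_orderOf_eq_one]
  · rw [IsCyclic.card_powMonoidHom_ker, Nat.card_zpowers, Nat.gcd_eq_right (orderOf_dvd_natCard x)]

lemma mem_powers_of_orderOf_dvd {M : Type*} [CommMonoid M] [Finite Mˣ] [IsCyclic Mˣ] {x y : M}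
    (hx : IsUnit x) (hy : IsUnit y) (h : orderOf y ∣ orderOf x) : y ∈ Submonoid.powers x := by
  obtain ⟨u, rfl⟩ := hx
  obtain ⟨v, rfl⟩ := hy
  rw [orderOf_units, orderOf_units] at h
  have hv : v ∈ Subgroup.zpowers u := by
    rw [zpowers_eq_ker_powMonoidHom_orderOf]
    exact orderOf_dvd_iff_pow_eq_one.1 h
  obtain ⟨k, rfl⟩ := mem_powers_iff_mem_zpowers.2 hv
  exact ⟨k, (Units.val_pow_eq_pow_val u k).symm⟩

lemma natCast_mem_powers_of_dvd {k m a b : ℕ} (h : k ∣ m)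
    (hb : (b : ZMod m) ∈ Submonoid.powers (a : ZMod m)) :
    (b : ZMod k) ∈ Submonoid.powers (a : ZMod k) := by
  obtain ⟨j, hj⟩ := hb
  exact ⟨j, by simpa only [map_pow, map_natCast] using congrArg (ZMod.castHom h (ZMod k)) hj⟩

lemma one_add_mul_pow_prime_pow_eq_one (hp : p.Prime) (hn : n ≠ 0) (hpn : n + 2 ≤ p * n) (i : ℕ)
    (x : ZMod (p ^ (i + n))) : (1 + p ^ n * x) ^ p ^ i = 1 := by
  obtain ⟨y, hy⟩ := ZMod.exists_one_add_mul_pow_prime_pow_eq (u := (p : ZMod (p ^ (i + n))) ^ n)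
    (v := p) hp (dvd_pow_self _ hn) (by
      rw [← pow_succ', ← pow_succ, ← pow_mul, mul_comm n p]
      exact pow_dvd_pow _ hpn) x i
  have hzero : (p : ZMod (p ^ (i + n))) ^ i * p ^ n = 0 := by
    rw [← pow_add]
    exact_mod_cast ZMod.natCast_self _
  rw [hy, hzero, zero_mul, add_zero]

lemma one_add_pow_mul_mem_powers (hp : p.Prime) (hodd : p ≠ 2) (hn : n ≠ 0) {u : ℤ}
    (hu : ¬ (p : ℤ) ∣ u) (i : ℕ) (x : ZMod (p ^ (i + n))) :
    1 + p ^ n * x ∈ Submonoid.powers (1 + p ^ n * u : ZMod (p ^ (i + n))) := by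
  have : NeZero (p ^ (i + n)) := ⟨pow_ne_zero _ hp.ne_zero⟩
  have := ZMod.isCyclic_units_of_prime_pow p hp hodd (i + n)
  have hpn : n + 2 ≤ p * n := by
    have hp3 : 3 ≤ p := hp.two_le.lt_of_ne' hodd
    have hn1 : 1 ≤ n := Nat.one_le_iff_ne_zero.2 hn
    nlinarith
  have hpow := one_add_mul_pow_prime_pow_eq_one hp hn hpn i
  have hunit (z : ZMod (p ^ (i + n))) : IsUnit (1 + p ^ n * z) :=
    IsUnit.of_pow_eq_one (hpow z) (pow_ne_zero i hp.ne_zero)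
  refine mem_powers_of_orderOf_dvd (hunit u) (hunit x) ?_
  rw [ZMod.orderOf_one_add_mul_prime_pow hp n hn hpn u hu i]
  exact orderOf_dvd_of_pow_eq_one (hpow x)

lemma clPow_one_add_pow_mul (hp : p.Prime) (hodd : p ≠ 2) (hn : n ≠ 0) {u : ℕ} (hu : ¬ p ∣ u) :
    clPow p (1 + p ^ n * u) = golombBasic 1 (p ^ n) := by
  have hu0 : 0 < u := Nat.pos_of_ne_zero fun h => hu (h ▸ dvd_zero p)
  have ha : 1 < 1 + p ^ n * u := Nat.lt_add_of_pos_right (Nat.mul_pos (pow_pos hp.pos n) hu0)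
  have hap : (1 + p ^ n * u).Coprime p := by
    obtain ⟨c, hc⟩ := (dvd_pow_self p hn).mul_right u
    simp [hc]
  refine Set.Subset.antisymm ?_ ?_
  · rw [clPow_subset_golombBasic_one_iff hp.one_lt ha hap]
    simp
  · rintro y ⟨c, hc⟩
    refine (mem_clPow hp.one_lt ha hap).2 fun i => ?_
    refine natCast_mem_powers_of_dvd (pow_dvd_pow p (Nat.le_add_right i n)) ?_
    have hmem := one_add_pow_mul_mem_powers hp hodd hn (Int.natCast_dvd_natCast.not.2 hu) i c
    simpa [hc] using hmem

lemma exists_eq_one_add_pow_mul {a : ℕ} (hp : p ≠ 1) (ha : 1 < a) (h : (a : ZMod p) = 1) :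
    ∃ n u, n ≠ 0 ∧ ¬ p ∣ u ∧ a = 1 + p ^ n * u := by
  obtain ⟨n, u, hu, hau⟩ := Nat.exists_eq_pow_mul_and_not_dvd (Nat.sub_ne_zero_of_lt ha) p hp
  refine ⟨n, u, ?_, hu, by omega⟩
  rintro rfl
  refine hu ?_
  rw [← ZMod.natCast_eq_zero_iff, ← one_mul u, ← pow_zero p, ← hau, Nat.cast_sub ha.le, h,
    Nat.cast_one, sub_self]

lemma exists_eq_golombBasic_of_subset (hp : p.Prime) (hodd : p ≠ 2) {X : Set ℕ+} (hX : X ∈ XX p)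
    (hsub : X ⊆ golombBasic 1 p) : ∃ n, 0 < n ∧ X = golombBasic 1 (p ^ n) := by
  obtain ⟨a, ha, hap, rfl⟩ := (mem_XX_iff hp).1 hX
  have hone : (a : ZMod p) = 1 :=
    mem_golombBasic_one.1 (hsub (self_mem_clPow hp.one_lt ha hap))
  obtain ⟨n, u, hn, hu, rfl⟩ := exists_eq_one_add_pow_mul hp.ne_one ha hone
  exact ⟨n, Nat.pos_of_ne_zero hn, clPow_one_add_pow_mul hp hodd hn hu⟩

lemma subset_or_subset_of_subset_golombBasic (hp : p.Prime) (hodd : p ≠ 2) {X Y : Set ℕ+}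
    (hX : X ∈ XX p) (hY : Y ∈ XX p) (hXsub : X ⊆ golombBasic 1 p) (hYsub : Y ⊆ golombBasic 1 p) :
    X ⊆ Y ∨ Y ⊆ X := by
  obtain ⟨m, -, rfl⟩ := exists_eq_golombBasic_of_subset hp hodd hX hXsub
  obtain ⟨n, -, rfl⟩ := exists_eq_golombBasic_of_subset hp hodd hY hYsub
  exact (le_total n m).imp (fun h => golombBasic_subset_of_dvd 1 (pow_dvd_pow p h))
    fun h => golombBasic_subset_of_dvd 1 (pow_dvd_pow p h)

end OneModP

section NotOneModP

variable {p a : ℕ}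

lemma dvd_of_pow_mem_powers_pow {M : Type*} [Monoid M] {x : M} (hx : IsOfFinOrder x) {d k : ℕ}
    (hd : d ∣ orderOf x) (h : x ^ k ∈ Submonoid.powers (x ^ d)) : d ∣ k := by
  obtain ⟨j, hj⟩ := h
  have hmod : d * j ≡ k [MOD orderOf x] := by
    rw [← hx.pow_eq_pow_iff_modEq, pow_mul]
    exact hj
  exact ((hmod.of_dvd hd).dvd_iff dvd_rfl).1 (dvd_mul_right d j)

lemma pow_pred_eq_one_of_not_dvd_orderOf (hp : p.Prime) {n : ℕ} {x : ZMod (p ^ n)}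
    (hx : IsUnit x) (h : ¬ p ∣ orderOf x) : x ^ (p - 1) = 1 := by
  obtain ⟨u, rfl⟩ := hx
  rw [orderOf_units] at h
  have hdvd : orderOf u ∣ p ^ n * (p - 1) := by
    rw [← Nat.totient_prime_pow_succ hp]
    exact (orderOf_dvd_of_pow_eq_one (ZMod.pow_totient u)).trans
      (Nat.totient_dvd_of_dvd (pow_dvd_pow p n.le_succ))
  have hcop : (orderOf u).Coprime (p ^ n) := ((hp.coprime_iff_not_dvd.2 h).pow_left n).symm
  rw [← Units.val_pow_eq_pow_val, Units.val_eq_one]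
  exact orderOf_dvd_iff_pow_eq_one.1 (hcop.dvd_of_dvd_mul_left hdvd)

lemma eq_of_forall_natCast_zmod_pow_eq {m n : ℕ} (hp : 1 < p)
    (h : ∀ i, (m : ZMod (p ^ i)) = n) : m = n := by
  have hlt : m + n < p ^ (m + n) := Nat.lt_pow_self hp
  exact ((ZMod.natCast_eq_natCast_iff _ _ _).1 (h (m + n))).eq_of_lt_of_lt (by omega) (by omega)

lemma exists_dvd_orderOf_zmod_pow (hp : p.Prime) (ha : 1 < a) (hap : a.Coprime p) :
    ∃ n, p ∣ orderOf (a : ZMod (p ^ n)) := by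
  by_contra! h
  have hone : a ^ (p - 1) = 1 := eq_of_forall_natCast_zmod_pow_eq hp.one_lt fun n => by
    push_cast
    exact pow_pred_eq_one_of_not_dvd_orderOf hp
      ((ZMod.isUnit_iff_coprime _ _).2 (hap.pow_right n)) (h n)
  exact (Nat.one_lt_pow (Nat.sub_ne_zero_of_lt hp.one_lt) ha).ne' hone

lemma not_clPow_pow_self_subset (hp : p.Prime) (ha : 1 < a) (hap : a.Coprime p)
    (hone : (a : ZMod p) ≠ 1) : ¬ clPow p (a ^ p) ⊆ clPow p (a ^ (p - 1)) := by
  have := Fact.mk hp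
  have hp1 : p - 1 ≠ 0 := Nat.sub_ne_zero_of_lt hp.one_lt
  rw [clPow_subset_clPow_iff hp.one_lt (Nat.one_lt_pow hp1 ha) (hap.pow_left _)
    (Nat.one_lt_pow hp.ne_zero ha) (hap.pow_left _)]
  intro h
  have ha0 : (a : ZMod p) ≠ 0 := ((ZMod.isUnit_iff_coprime a p).2 hap).ne_zero
  have hmem := h 1
  rw [pow_one, Nat.cast_pow, Nat.cast_pow, ZMod.pow_card, ZMod.pow_card_sub_one_eq_one ha0,
    Submonoid.powers_one, Submonoid.mem_bot] at hmem
  exact hone hmem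

lemma not_clPow_pow_pred_subset (hp : p.Prime) (ha : 1 < a) (hap : a.Coprime p) :
    ¬ clPow p (a ^ (p - 1)) ⊆ clPow p (a ^ p) := by
  have hp1 : p - 1 ≠ 0 := Nat.sub_ne_zero_of_lt hp.one_lt
  rw [clPow_subset_clPow_iff hp.one_lt (Nat.one_lt_pow hp.ne_zero ha) (hap.pow_left _)
    (Nat.one_lt_pow hp1 ha) (hap.pow_left _)]
  intro h
  obtain ⟨n, hn⟩ := exists_dvd_orderOf_zmod_pow hp ha hap
  have : NeZero (p ^ n) := ⟨pow_ne_zero _ hp.ne_zero⟩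
  have hfin : IsOfFinOrder (a : ZMod (p ^ n)) :=
    ((ZMod.isUnit_iff_coprime _ _).2 (hap.pow_right n)).isOfFinOrder
  have hdvd : p ∣ p - 1 := dvd_of_pow_mem_powers_pow hfin hn (by simpa using h n)
  exact Nat.not_dvd_of_pos_of_lt (Nat.pos_of_ne_zero hp1) (Nat.sub_lt hp.pos one_pos) hdvd

lemma subset_golombBasic_of_upChain (hp : p.Prime) {t : Set ℕ+} (ht : t ∈ XX p)
    (hchain : upChain p t) : t ⊆ golombBasic 1 p := by
  obtain ⟨a, ha, hap, rfl⟩ := (mem_XX_iff hp).1 ht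
  have hmem {k : ℕ} (hk : k ≠ 0) : clPow p (a ^ k) ∈ XX p :=
    (mem_XX_iff hp).2 ⟨a ^ k, Nat.one_lt_pow hk ha, hap.pow_left k, rfl⟩
  have hsub {k : ℕ} (hk : k ≠ 0) := clPow_pow_subset hp.one_lt ha hap hk
  have hp1 : p - 1 ≠ 0 := Nat.sub_ne_zero_of_lt hp.one_lt
  have hone : (a : ZMod p) = 1 := by
    by_contra hone
    exact (hchain _ (hmem hp.ne_zero) _ (hmem hp1) (hsub hp.ne_zero) (hsub hp1)).elim
      (not_clPow_pow_self_subset hp ha hap hone) (not_clPow_pow_pred_subset hp ha hap)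
  have hsubset := clPow_subset_golombBasic_one_iff hp.one_lt ha hap (n := 1)
  rw [pow_one] at hsubset
  exact hsubset.2 hone

end NotOneModP

/-- For an odd prime `p`, the family `{1 + p^nℕ₀ : n ∈ ℕ}` coincides with the set of
`↑`-chain elements of the poset `𝒳_p`, and this set is linearly ordered by inclusion. -/
theorem upChain_elements_XX (p : ℕ) (hp : p.Prime) (hodd : p ≠ 2) :
    (∀ t ∈ XX p, (upChain p t ↔ ∃ n : ℕ, 0 < n ∧ t = golombBasic 1 (p ^ n))) ∧
    (∀ t ∈ XX p, ∀ s ∈ XX p, upChain p t → upChain p s → t ⊆ s ∨ s ⊆ t) := by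
  have hsub_p (t) (ht : t ∈ XX p) (hchain : upChain p t) : t ⊆ golombBasic 1 p :=
    subset_golombBasic_of_upChain hp ht hchain
  refine ⟨fun t ht => ⟨fun hchain => ?_, ?_⟩, fun t ht s hs hct hcs => ?_⟩
  · exact exists_eq_golombBasic_of_subset hp hodd ht (hsub_p t ht hchain)
  · rintro ⟨n, hn, rfl⟩ X hX Y hY hXt hYt
    have hsub : golombBasic 1 (p ^ n) ⊆ golombBasic 1 p :=
      golombBasic_subset_of_dvd 1 (dvd_pow_self p hn.ne')
    exact subset_or_subset_of_subset_golombBasic hp hodd hX hY (hXt.trans hsub) (hYt.trans hsub)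
  · exact subset_or_subset_of_subset_golombBasic hp hodd ht hs (hsub_p t ht hct) (hsub_p s hs hcs)
end
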